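/- Let C be a copula, let γ = γ(C) = 4·∫₀¹ ( C(u,u) + C(u,1−u) ) du − 2 and β(C) = 4·C(1/2,1/2) − 1. Then β(C) is bounded below by −1 if −1 ≤ γ ≤ −1/2 and by 1 − 2·√(2(1−γ)/3) if γ > −1/2, and β(C) is bounded above by 1 if 1/2 ≤ γ ≤ 1 and by −1 + 2·√(2(1+γ)/3) if γ < 1/2. -/

import Mathlib

/-- A (bivariate) copula: boundary conditions on `[0,1]` and the 2-increasing property. -/
def IsCopula (C : ℝ → ℝ → ℝ) : Prop :=
  (∀ u ∈ Set.Icc (0:ℝ) 1, C u 0 = 0 ∧ C 0 u = 0 ∧ C u 1 = u ∧ C 1 u = u) ∧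
  (∀ u₁ u₂ v₁ v₂ : ℝ, 0 ≤ u₁ → u₁ ≤ u₂ → u₂ ≤ 1 → 0 ≤ v₁ → v₁ ≤ v₂ → v₂ ≤ 1 →
    0 ≤ C u₁ v₁ + C u₂ v₂ - C u₁ v₂ - C u₂ v₁)

/-- Gini's gamma of a copula. -/
noncomputable def giniGamma (C : ℝ → ℝ → ℝ) : ℝ :=
  4 * (∫ u in (0:ℝ)..1, (C u u + C u (1 - u))) - 2

/-- Blomqvist's beta of a copula. -/
noncomputable def blomqvistBeta (C : ℝ → ℝ → ℝ) : ℝ :=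
  4 * C (1/2) (1/2) - 1

/-!
The reflection `(u, v) ↦ v - C (1 - u, v)` of a copula is again a copula, and it changes the sign of
both `γ` and `β`, so the upper bound for `β` suffices. Put `b = C (1/2, 1/2)`. A copula is
nondecreasing and `1`-Lipschitz in each variable, hence
`C (u, v) ≥ b - max (1/2 - u) 0 - max (1/2 - v) 0`, in addition to the Fréchet lower bound
`C (u, v) ≥ max (u + v - 1) 0`. On the two diagonals the larger of these bounds is the Fréchet bound
plus a tent centred at `1/2`, of area `b ^ 2 / 2` on the main diagonal and `b ^ 2` on the other one.
Integrating gives `γ ≥ 6 * b ^ 2 - 1`, which is the claim solved for `β = 4 * b - 1`.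
-/

open Set Function MeasureTheory

/-- The tent function of height and half-width `r` centred at `c`. On both diagonals, such tents
bound from below how far a copula lies above the Fréchet lower bound. -/
def tent (c r x : ℝ) : ℝ := max (r - |x - c|) 0

@[fun_prop]
lemma continuous_tent (c r : ℝ) : Continuous (tent c r) := by
  unfold tent
  fun_prop

lemma support_tent_subset (c r : ℝ) : support (tent c r) ⊆ Ioo (c - r) (c + r) := by
  intro x hx
  have hdist : |x - c| < r := by
    by_contra! hle
    exact hx (max_eq_right (by linarith))
  constructor <;> linarith [abs_lt.mp hdist]

lemma integral_tent {c r : ℝ} (hr : 0 ≤ r) : ∫ x, tent c r x = r ^ 2 := by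
  calc ∫ x, tent c r x
      = ∫ x, max (r - |x|) 0 := integral_sub_right_eq_self (fun x ↦ max (r - |x|) 0) c
    _ = 2 * ∫ x in Ioi 0, max (r - x) 0 := integral_comp_abs (f := fun x ↦ max (r - x) 0)
    _ = 2 * ∫ x in (0 : ℝ)..r, max (r - x) 0 := by
        rw [intervalIntegral.integral_of_le hr,
          setIntegral_eq_of_subset_of_forall_sdiff_eq_zero measurableSet_Ioi Ioc_subset_Ioi_self]
        rintro x ⟨hx₀, hxr⟩
        have hrx : r < x := not_le.mp fun hle ↦ hxr ⟨hx₀, hle⟩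
        exact max_eq_right (by linarith)
    _ = 2 * ∫ x in (0 : ℝ)..r, (r - x) := by
        congr 1
        refine intervalIntegral.integral_congr fun x hx ↦ max_eq_left ?_
        rw [uIcc_of_le hr] at hx
        linarith [hx.2]
    _ = r ^ 2 := by
        rw [intervalIntegral.integral_sub (by simp) (by simp), integral_id,
          intervalIntegral.integral_const, smul_eq_mul]
        ring

lemma intervalIntegral_tent {a b c r : ℝ} (hr : 0 ≤ r) (ha : a ≤ c - r) (hb : c + r ≤ b) :
    ∫ x in a..b, tent c r x = r ^ 2 := by
  rw [intervalIntegral.integral_eq_integral_of_support_subset, integral_tent hr]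
  exact (support_tent_subset c r).trans
    ((Ioo_subset_Ioo ha hb).trans Ioo_subset_Ioc_self)

/-- The reflection `(u, v) ↦ v - C (1 - u, v)` of a copula: if `C` is the joint distribution
function of `(U, V)`, this is the one of `(1 - U, V)`. It exchanges lower and upper bounds. -/
def reflectLeft (C : ℝ → ℝ → ℝ) (u v : ℝ) : ℝ := v - C (1 - u) v

lemma blomqvistBeta_reflectLeft (C : ℝ → ℝ → ℝ) :
    blomqvistBeta (reflectLeft C) = -blomqvistBeta C := by
  rw [blomqvistBeta, blomqvistBeta, reflectLeft, sub_half]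
  ring

lemma half_mem_Icc : (1 / 2 : ℝ) ∈ Icc (0 : ℝ) 1 := by norm_num

namespace IsCopula

variable {C : ℝ → ℝ → ℝ} {u v a c : ℝ}

lemma apply_zero (hC : IsCopula C) (hu : u ∈ Icc 0 1) : C u 0 = 0 := (hC.1 u hu).1

lemma zero_apply (hC : IsCopula C) (hv : v ∈ Icc 0 1) : C 0 v = 0 := (hC.1 v hv).2.1

lemma apply_one (hC : IsCopula C) (hu : u ∈ Icc 0 1) : C u 1 = u := (hC.1 u hu).2.2.1

lemma one_apply (hC : IsCopula C) (hv : v ∈ Icc 0 1) : C 1 v = v := (hC.1 v hv).2.2.2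

protected lemma swap (hC : IsCopula C) : IsCopula fun u v ↦ C v u := by
  refine ⟨fun u hu ↦ ?_, fun u₁ u₂ v₁ v₂ hu₁ hu hu₂ hv₁ hv hv₂ ↦ ?_⟩
  · exact ⟨hC.zero_apply hu, hC.apply_zero hu, hC.one_apply hu, hC.apply_one hu⟩
  · linarith [hC.2 v₁ v₂ u₁ u₂ hv₁ hv hv₂ hu₁ hu hu₂]

protected lemma reflectLeft (hC : IsCopula C) : IsCopula (reflectLeft C) := by
  refine ⟨fun u hu ↦ ?_, fun u₁ u₂ v₁ v₂ hu₁ hu hu₂ hv₁ hv hv₂ ↦ ?_⟩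
  · have hu' := Icc.mem_iff_one_sub_mem.mp hu
    simp [reflectLeft, hC.zero_apply hu, hC.one_apply hu, hC.apply_zero hu', hC.apply_one hu']
  · have := hC.2 (1 - u₂) (1 - u₁) v₁ v₂ (by linarith) (by linarith) (by linarith) hv₁ hv hv₂
    unfold reflectLeft
    linarith

lemma le_add_max_left (hC : IsCopula C) (ha : a ∈ Icc 0 1) (hu : u ∈ Icc 0 1)
    (hv : v ∈ Icc 0 1) : C a v ≤ C u v + max (a - u) 0 := by
  rcases le_total a u with hau | hua
  · have hrect := hC.2 a u 0 v ha.1 hau hu.2 le_rfl hv.1 hv.2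
    linarith [hC.apply_zero ha, hC.apply_zero hu, le_max_right (a - u) 0]
  · have hrect := hC.2 u a v 1 hu.1 hua ha.2 hv.1 hv.2 le_rfl
    linarith [hC.apply_one ha, hC.apply_one hu, le_max_left (a - u) 0]

lemma le_add_max_add_max (hC : IsCopula C) (ha : a ∈ Icc 0 1) (hc : c ∈ Icc 0 1)
    (hu : u ∈ Icc 0 1) (hv : v ∈ Icc 0 1) :
    C a c ≤ C u v + max (a - u) 0 + max (c - v) 0 := by
  linarith [hC.le_add_max_left ha hu hc, hC.swap.le_add_max_left hc hv hu]

lemma nonneg (hC : IsCopula C) (hu : u ∈ Icc 0 1) (hv : v ∈ Icc 0 1) : 0 ≤ C u v := by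
  have h := hC.le_add_max_left (left_mem_Icc.mpr zero_le_one) hu hv
  rwa [hC.zero_apply hv, max_eq_right (by linarith [hu.1]), add_zero] at h

lemma add_sub_one_le (hC : IsCopula C) (hu : u ∈ Icc 0 1) (hv : v ∈ Icc 0 1) :
    u + v - 1 ≤ C u v := by
  have h := hC.le_add_max_left (right_mem_Icc.mpr zero_le_one) hu hv
  rw [hC.one_apply hv, max_eq_left (by linarith [hu.2])] at h
  linarith

lemma le_left (hC : IsCopula C) (hu : u ∈ Icc 0 1) (hv : v ∈ Icc 0 1) : C u v ≤ u := by
  have h := hC.le_add_max_left hu (left_mem_Icc.mpr zero_le_one) hv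
  rwa [hC.zero_apply hv, sub_zero, max_eq_left hu.1, zero_add] at h

lemma lipschitzOnWith_uncurry (hC : IsCopula C) :
    LipschitzOnWith 2 (uncurry C) (Icc 0 1 ×ˢ Icc 0 1) := by
  refine LipschitzOnWith.of_le_add_mul 2 fun p hp q hq ↦ ?_
  have hmax (s t : ℝ) : max (s - t) 0 ≤ dist s t := max_le (le_abs_self _) dist_nonneg
  have hfst : dist p.1 q.1 ≤ dist p q := le_max_left _ _
  have hsnd : dist p.2 q.2 ≤ dist p q := le_max_right _ _
  calc C p.1 p.2
      ≤ C q.1 q.2 + max (p.1 - q.1) 0 + max (p.2 - q.2) 0 :=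
        hC.le_add_max_add_max hp.1 hp.2 hq.1 hq.2
    _ ≤ C q.1 q.2 + 2 * dist p q := by linarith [hmax p.1 q.1, hmax p.2 q.2]

lemma intervalIntegrable_diag_add_antidiag (hC : IsCopula C) :
    IntervalIntegrable (fun u ↦ C u u + C u (1 - u)) volume 0 1 := by
  have hcont := hC.lipschitzOnWith_uncurry.continuousOn
  refine ContinuousOn.intervalIntegrable_of_Icc zero_le_one (ContinuousOn.add ?_ ?_)
  · exact hcont.comp (f := fun u ↦ (u, u)) (by fun_prop) fun u hu ↦ ⟨hu, hu⟩
  · exact hcont.comp (f := fun u ↦ (u, 1 - u)) (by fun_prop)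
      fun u hu ↦ ⟨hu, Icc.mem_iff_one_sub_mem.mp hu⟩

lemma giniGamma_reflectLeft (hC : IsCopula C) : giniGamma (reflectLeft C) = -giniGamma C := by
  have hint : ∫ u in (0 : ℝ)..1, (reflectLeft C u u + reflectLeft C u (1 - u)) =
      1 - ∫ u in (0 : ℝ)..1, (C u u + C u (1 - u)) := by
    calc _ = ∫ u in (0 : ℝ)..1, (1 - (C (1 - u) (1 - u) + C (1 - u) (1 - (1 - u)))) := by
          congr 1 with u
          rw [sub_sub_cancel]
          unfold reflectLeft
          ring
      _ = ∫ u in (0 : ℝ)..1, (1 - (C u u + C u (1 - u))) := by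
          simpa using intervalIntegral.integral_comp_sub_left
            (fun u ↦ 1 - (C u u + C u (1 - u))) 1 (a := 0) (b := 1)
      _ = _ := by
          rw [intervalIntegral.integral_sub (by simp) hC.intervalIntegrable_diag_add_antidiag]
          simp
  rw [giniGamma, giniGamma, hint]
  ring

lemma sub_tent_add_tent_le_diag (hC : IsCopula C) (hu : u ∈ Icc 0 1) :
    u - tent (1 / 2) (1 / 2) u + 2 * tent (1 / 2) (C (1 / 2) (1 / 2) / 2) u ≤ C u u := by
  set b := C (1 / 2) (1 / 2)
  have hfrechet : max (2 * u - 1) 0 ≤ C u u :=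
    max_le (by linarith [hC.add_sub_one_le hu hu]) (hC.nonneg hu hu)
  have hcentre : b ≤ C u u + max (1 / 2 - u) 0 + max (1 / 2 - u) 0 :=
    hC.le_add_max_add_max half_mem_Icc half_mem_Icc hu hu
  have habs : 2 * max (1 / 2 - u) 0 + max (2 * u - 1) 0 = |2 * u - 1| := by grind
  have hfrechet_eq : u - tent (1 / 2) (1 / 2) u = max (2 * u - 1) 0 := by grind [tent]
  have htent_eq : 2 * tent (1 / 2) (b / 2) u = max (b - |2 * u - 1|) 0 := by grind [tent]
  have hgap : max (b - |2 * u - 1|) 0 ≤ C u u - max (2 * u - 1) 0 :=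
    max_le (by linarith) (by linarith)
  linarith

lemma tent_le_antidiag (hC : IsCopula C) (hu : u ∈ Icc 0 1) :
    tent (1 / 2) (C (1 / 2) (1 / 2)) u ≤ C u (1 - u) := by
  have hu' := Icc.mem_iff_one_sub_mem.mp hu
  have hcentre := hC.le_add_max_add_max half_mem_Icc half_mem_Icc hu hu'
  have habs : max (1 / 2 - u) 0 + max (1 / 2 - (1 - u)) 0 = |u - 1 / 2| := by grind
  exact max_le (by linarith) (hC.nonneg hu hu')

lemma add_sq_le_integral_diag_add_antidiag (hC : IsCopula C) :
    1 / 4 + 3 / 2 * C (1 / 2) (1 / 2) ^ 2 ≤ ∫ u in (0 : ℝ)..1, (C u u + C u (1 - u)) := by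
  set b := C (1 / 2) (1 / 2)
  have hb₀ : 0 ≤ b := hC.nonneg half_mem_Icc half_mem_Icc
  have hb₁ : b ≤ 1 / 2 := hC.le_left half_mem_Icc half_mem_Icc
  have hint {f : ℝ → ℝ} (hf : Continuous f) : IntervalIntegrable f volume 0 1 :=
    hf.intervalIntegrable 0 1
  calc 1 / 4 + 3 / 2 * b ^ 2
      = ∫ u in (0 : ℝ)..1, (u - tent (1 / 2) (1 / 2) u + 2 * tent (1 / 2) (b / 2) u +
          tent (1 / 2) b u) := by
        rw [intervalIntegral.integral_add (hint (by fun_prop)) (hint (by fun_prop)),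
          intervalIntegral.integral_add (hint (by fun_prop)) (hint (by fun_prop)),
          intervalIntegral.integral_sub (hint (by fun_prop)) (hint (by fun_prop)),
          intervalIntegral.integral_const_mul, integral_id,
          intervalIntegral_tent (by norm_num) (by norm_num) (by norm_num),
          intervalIntegral_tent (by linarith) (by linarith) (by linarith),
          intervalIntegral_tent hb₀ (by linarith) (by linarith)]
        ring
    _ ≤ ∫ u in (0 : ℝ)..1, (C u u + C u (1 - u)) :=
        intervalIntegral.integral_mono_on zero_le_one (hint (by fun_prop))
          hC.intervalIntegrable_diag_add_antidiag
          fun u hu ↦ add_le_add (hC.sub_tent_add_tent_le_diag hu) (hC.tent_le_antidiag hu)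

lemma neg_one_le_blomqvistBeta (hC : IsCopula C) : -1 ≤ blomqvistBeta C := by
  unfold blomqvistBeta
  linarith [hC.nonneg half_mem_Icc half_mem_Icc]

lemma blomqvistBeta_le_sqrt (hC : IsCopula C) :
    blomqvistBeta C ≤ -1 + 2 * √(2 * (1 + giniGamma C) / 3) := by
  have hsqrt : (1 + blomqvistBeta C) / 2 ≤ √(2 * (1 + giniGamma C) / 3) := by
    apply Real.le_sqrt_of_sq_le
    unfold blomqvistBeta giniGamma
    linarith [hC.add_sq_le_integral_diag_add_antidiag]
  linarith

end IsCopula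

/-- Bounds for Blomqvist's beta of a copula in terms of its Gini's gamma. -/
theorem beta_bounds_of_gamma (C : ℝ → ℝ → ℝ) (hC : IsCopula C) :
    (if giniGamma C ≤ -(1/2) then (-1 : ℝ)
      else 1 - 2 * Real.sqrt (2 * (1 - giniGamma C) / 3)) ≤ blomqvistBeta C ∧
    blomqvistBeta C ≤
      (if (1/2 : ℝ) ≤ giniGamma C then (1 : ℝ)
      else -1 + 2 * Real.sqrt (2 * (1 + giniGamma C) / 3)) := by
  have hβ := blomqvistBeta_reflectLeft C
  have hγ := hC.giniGamma_reflectLeft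
  constructor
  · split_ifs
    · exact hC.neg_one_le_blomqvistBeta
    · have hlower := hC.reflectLeft.blomqvistBeta_le_sqrt
      rw [hβ, hγ, ← sub_eq_add_neg] at hlower
      linarith
  · split_ifs
    · linarith [hC.reflectLeft.neg_one_le_blomqvistBeta]
    · exact hC.blomqvistBeta_le_sqrt
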